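/- arXiv:2109.01629 — 3 statements merged into one kernel-verified Lean document; each statement's English description precedes it below -/
import Mathlib

section
/- Let H be a real inner product space and let P₁, P₂ : H → H be maps with P₂0 = 0. Suppose α, β ∈ [0,π] are such that θ(u, P₁u) ≤ α for every u ≠ 0 with P₁u ≠ 0, and θ(u, P₂u) ≤ β for every u ≠ 0 with P₂u ≠ 0. Then for every u ≠ 0 with P₂(P₁u) ≠ 0 one has θ(u, P₂(P₁u)) ≤ α + β. (This is the cascade bound θ(P₂P₁) ≤ θ(P₁) + θ(P₂) for the singular angle.) -/
open InnerProductGeometry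

/-- **Cascade bound for the singular angle**: if `P₁` has singular angle at most `α`
and `P₂` has singular angle at most `β` (with `P₂ 0 = 0`), then the cascade `P₂ ∘ P₁`
has singular angle at most `α + β`. The angle is
`θ(x,y) = arccos(⟪x,y⟫ / (‖x‖·‖y‖))`. -/
theorem cascade_singular_angle {H : Type*} [NormedAddCommGroup H]
    [InnerProductSpace ℝ H] (P₁ P₂ : H → H) (hP₂0 : P₂ 0 = 0) (α β : ℝ)
    (hα : α ∈ Set.Icc 0 Real.pi) (hβ : β ∈ Set.Icc 0 Real.pi)
    (h₁ : ∀ u : H, u ≠ 0 → P₁ u ≠ 0 → angle u (P₁ u) ≤ α)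
    (h₂ : ∀ u : H, u ≠ 0 → P₂ u ≠ 0 → angle u (P₂ u) ≤ β) :
    ∀ u : H, u ≠ 0 → P₂ (P₁ u) ≠ 0 → angle u (P₂ (P₁ u)) ≤ α + β := by
  intro u hu hP₂P₁u
  have hP₁u : P₁ u ≠ 0 := ne_of_apply_ne P₂ (by rwa [hP₂0])
  calc angle u (P₂ (P₁ u))
      ≤ angle u (P₁ u) + angle (P₁ u) (P₂ (P₁ u)) := angle_le_angle_add_angle _ _ _
    _ ≤ α + β := add_le_add (h₁ u hu hP₁u) (h₂ (P₁ u) hP₁u hP₂P₁u)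
end

section
/- Let 0 < a < b and let h : ℝ → ℝ be a measurable function in the sector [a,b]. Then (a+b)·x·h(x) ≥ a·b·x² + h(x)² for every x ∈ ℝ; consequently, for every square-integrable measurable u : ℝ → ℝ, the function t ↦ h(u(t)) is square-integrable, the function t ↦ u(t)·h(u(t)) is integrable, and ∫ u(t)·h(u(t)) dt ≥ (ab/(a+b))·∫ u(t)² dt + (1/(a+b))·∫ h(u(t))² dt. That is, the static nonlinearity N : u ↦ h∘u is very strictly passive with input index ab/(a+b) and output index 1/(a+b). -/
/-!
Expanding the sector condition `⟪y - a • x, y - b • x⟫ ≤ 0` gives the pointwise dissipation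
inequality `a * b * ‖x‖ ^ 2 + ‖y‖ ^ 2 ≤ (a + b) * ⟪x, y⟫`. The condition also forces the linear
growth bound `‖y‖ ≤ max |a| |b| * ‖x‖`, so square-integrability passes from the input to the
output, and the pointwise inequality can be integrated and divided by `a + b`.
-/

open MeasureTheory

section Sector

open scoped InnerProductSpace

variable {E : Type*} [NormedAddCommGroup E] [InnerProductSpace ℝ E] {a b : ℝ}

theorem inner_sub_smul_sub_smul (a b : ℝ) (x y : E) :
    ⟪y - a • x, y - b • x⟫_ℝ = a * b * ‖x‖ ^ 2 + ‖y‖ ^ 2 - (a + b) * ⟪x, y⟫_ℝ := by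
  simp only [inner_sub_left, inner_sub_right, real_inner_smul_left, real_inner_smul_right,
    real_inner_self_eq_norm_sq, real_inner_comm x y]
  ring

theorem mul_norm_sq_add_norm_sq_le_of_inner_nonpos {x y : E}
    (hxy : ⟪y - a • x, y - b • x⟫_ℝ ≤ 0) :
    a * b * ‖x‖ ^ 2 + ‖y‖ ^ 2 ≤ (a + b) * ⟪x, y⟫_ℝ := by
  rwa [inner_sub_smul_sub_smul, sub_nonpos] at hxy

theorem norm_le_max_abs_mul_norm_of_inner_nonpos {x y : E}
    (hxy : ⟪y - a • x, y - b • x⟫_ℝ ≤ 0) : ‖y‖ ≤ max |a| |b| * ‖x‖ := by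
  have quadratic_le : a * b * ‖x‖ ^ 2 + ‖y‖ ^ 2 ≤ |a + b| * (‖x‖ * ‖y‖) :=
    calc a * b * ‖x‖ ^ 2 + ‖y‖ ^ 2
        ≤ (a + b) * ⟪x, y⟫_ℝ := mul_norm_sq_add_norm_sq_le_of_inner_nonpos hxy
      _ ≤ |(a + b) * ⟪x, y⟫_ℝ| := le_abs_self _
      _ = |a + b| * |⟪x, y⟫_ℝ| := abs_mul _ _
      _ ≤ |a + b| * (‖x‖ * ‖y‖) := by gcongr; exact abs_real_inner_le_norm x y
  by_contra! norm_gt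
  -- The quadratic in `‖y‖` has roots `s * a * ‖x‖` and `s * b * ‖x‖`, where `s = ±1` is the sign
  -- of `a + b`; here `‖y‖` exceeds both.
  have abs_a_lt : |a * ‖x‖| < ‖y‖ := by
    rw [abs_mul, abs_norm]
    exact (mul_le_mul_of_nonneg_right (le_max_left _ _) (norm_nonneg x)).trans_lt norm_gt
  have abs_b_lt : |b * ‖x‖| < ‖y‖ := by
    rw [abs_mul, abs_norm]
    exact (mul_le_mul_of_nonneg_right (le_max_right _ _) (norm_nonneg x)).trans_lt norm_gt
  rw [abs_lt] at abs_a_lt abs_b_lt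
  rcases abs_choice (a + b) with hsum | hsum <;> rw [hsum] at quadratic_le
  · have product_pos : 0 < (‖y‖ - a * ‖x‖) * (‖y‖ - b * ‖x‖) :=
      mul_pos (sub_pos.2 abs_a_lt.2) (sub_pos.2 abs_b_lt.2)
    linarith
  · have product_pos : 0 < (‖y‖ + a * ‖x‖) * (‖y‖ + b * ‖x‖) :=
      mul_pos (neg_lt_iff_pos_add'.1 abs_a_lt.1) (neg_lt_iff_pos_add'.1 abs_b_lt.1)
    linarith

variable {α : Type*} [MeasurableSpace α] {μ : Measure α} {u y : α → E}

theorem memLp_of_ae_inner_nonpos {p : ENNReal} (hu : MemLp u p μ) (hy : AEStronglyMeasurable y μ)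
    (hsector : ∀ᵐ t ∂μ, ⟪y t - a • u t, y t - b • u t⟫_ℝ ≤ 0) : MemLp y p μ :=
  hu.of_le_mul hy (hsector.mono fun _ => norm_le_max_abs_mul_norm_of_inner_nonpos)

theorem integrable_inner_of_memLp {p q : ENNReal} [p.HolderConjugate q] (hu : MemLp u p μ)
    (hy : MemLp y q μ) : Integrable (fun t => ⟪u t, y t⟫_ℝ) μ :=
  memLp_one_iff_integrable.1 ((innerSL ℝ).memLp_of_bilin 1 hu hy)

theorem mul_integral_norm_sq_add_integral_norm_sq_le (hu : MemLp u 2 μ) (hy : MemLp y 2 μ)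
    (hsector : ∀ᵐ t ∂μ, ⟪y t - a • u t, y t - b • u t⟫_ℝ ≤ 0) :
    a * b * ∫ t, ‖u t‖ ^ 2 ∂μ + ∫ t, ‖y t‖ ^ 2 ∂μ ≤ (a + b) * ∫ t, ⟪u t, y t⟫_ℝ ∂μ := by
  have hu_sq : Integrable (fun t => a * b * ‖u t‖ ^ 2) μ :=
    hu.norm.integrable_sq.const_mul (a * b)
  have hy_sq : Integrable (fun t => ‖y t‖ ^ 2) μ := hy.norm.integrable_sq
  rw [← integral_const_mul, ← integral_const_mul, ← integral_add hu_sq hy_sq]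
  exact integral_mono_ae (hu_sq.add hy_sq) ((integrable_inner_of_memLp hu hy).const_mul (a + b))
    (hsector.mono fun _ => mul_norm_sq_add_norm_sq_le_of_inner_nonpos)

theorem sector_nonlinearity_very_strictly_passive_general [MeasurableSpace E] [BorelSpace E]
    (hab : 0 < a + b) {h : E → E} (hmeas : StronglyMeasurable h)
    (hsector : ∀ x, ⟪h x - a • x, h x - b • x⟫_ℝ ≤ 0) :
    (∀ x, a * b * ‖x‖ ^ 2 + ‖h x‖ ^ 2 ≤ (a + b) * ⟪x, h x⟫_ℝ) ∧
    ∀ u : α → E, AEStronglyMeasurable u μ → Integrable (fun t => ‖u t‖ ^ 2) μ →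
      Integrable (fun t => ‖h (u t)‖ ^ 2) μ ∧
      Integrable (fun t => ⟪u t, h (u t)⟫_ℝ) μ ∧
      a * b / (a + b) * ∫ t, ‖u t‖ ^ 2 ∂μ + 1 / (a + b) * ∫ t, ‖h (u t)‖ ^ 2 ∂μ ≤
        ∫ t, ⟪u t, h (u t)⟫_ℝ ∂μ := by
  refine ⟨fun x => mul_norm_sq_add_norm_sq_le_of_inner_nonpos (hsector x), fun u hu hu_sq => ?_⟩
  have hsector_u : ∀ᵐ t ∂μ, ⟪h (u t) - a • u t, h (u t) - b • u t⟫_ℝ ≤ 0 :=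
    .of_forall fun t => hsector (u t)
  have hu_memLp : MemLp u 2 μ := (memLp_two_iff_integrable_sq_norm hu).2 hu_sq
  have hhu_memLp : MemLp (fun t => h (u t)) 2 μ :=
    memLp_of_ae_inner_nonpos hu_memLp
      (hmeas.aestronglyMeasurable.comp_aemeasurable hu.aemeasurable) hsector_u
  refine ⟨hhu_memLp.norm.integrable_sq, integrable_inner_of_memLp hu_memLp hhu_memLp, ?_⟩
  calc a * b / (a + b) * ∫ t, ‖u t‖ ^ 2 ∂μ + 1 / (a + b) * ∫ t, ‖h (u t)‖ ^ 2 ∂μ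
      = (a * b * ∫ t, ‖u t‖ ^ 2 ∂μ + ∫ t, ‖h (u t)‖ ^ 2 ∂μ) / (a + b) := by ring
    _ ≤ ∫ t, ⟪u t, h (u t)⟫_ℝ ∂μ :=
      (div_le_iff₀' hab).2
        (mul_integral_norm_sq_add_integral_norm_sq_le hu_memLp hhu_memLp hsector_u)

end Sector

/-- **Sector bounded static nonlinearities are very strictly passive.**
If `h` is measurable and in the sector `[a,b]` with `0 < a < b`, then
`(a+b)·x·h(x) ≥ ab·x² + h(x)²` pointwise; consequently for every square-integrable
measurable `u`, `t ↦ h(u t)` is square-integrable, `t ↦ u t · h(u t)` is integrable,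
and `∫ u·(h∘u) ≥ (ab/(a+b))·∫ u² + (1/(a+b))·∫ (h∘u)²`. -/
theorem sector_nonlinearity_very_strictly_passive
    (a b : ℝ) (ha : 0 < a) (hab : a < b) (h : ℝ → ℝ) (hmeas : Measurable h)
    (hsector : ∀ x : ℝ, (h x - a * x) * (h x - b * x) ≤ 0) :
    (∀ x : ℝ, (a + b) * (x * h x) ≥ a * b * x ^ 2 + (h x) ^ 2) ∧
    ∀ u : ℝ → ℝ, Measurable u →
      Integrable (fun t => (u t) ^ 2) (volume : Measure ℝ) →
      Integrable (fun t => (h (u t)) ^ 2) (volume : Measure ℝ) ∧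
      Integrable (fun t => u t * h (u t)) (volume : Measure ℝ) ∧
      (∫ t, u t * h (u t)) ≥
        (a * b / (a + b)) * (∫ t, (u t) ^ 2) + (1 / (a + b)) * (∫ t, (h (u t)) ^ 2) := by
  have general := sector_nonlinearity_very_strictly_passive_general (α := ℝ) (μ := volume)
    (add_pos ha (ha.trans hab)) hmeas.stronglyMeasurable
    (by simpa only [Real.inner_apply, smul_eq_mul] using hsector)
  simp only [Real.inner_apply, Real.norm_eq_abs, sq_abs] at general
  exact ⟨general.1, fun u hu => general.2 u hu.aestronglyMeasurable⟩
end

section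
/- Let 0 < a < b and let h : ℝ → ℝ be a measurable function in the sector [a,b]. Then for every square-integrable measurable u : ℝ → ℝ, ∫ u(t)·h(u(t)) dt ≥ (2√(ab)/(a+b))·(∫ u(t)² dt)^{1/2}·(∫ h(u(t))² dt)^{1/2}. Equivalently, the singular angle of the static nonlinearity N : u ↦ h∘u is at most arccos(2√(ab)/(a+b)) < π/2. -/
open MeasureTheory Real

/-!
Expanding the sector condition `⟪y - a • x, y - b • x⟫ ≤ 0` gives
`‖y‖² + ab ‖x‖² ≤ (a + b) ⟪x, y⟫`, and the left-hand side is at least `2 √(ab) ‖x‖ ‖y‖` by AM-GM.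
This holds in any real inner product space. Since the `L²` inner product is the integral of the
pointwise one, a pointwise sector condition on two signals is a sector condition in `L²`.
-/

section InnerProduct

variable {E : Type*} [NormedAddCommGroup E] [InnerProductSpace ℝ E] {a b : ℝ} {x y : E}

/-- The pair `(x, y)` satisfies the sector condition with bounds `a` and `b`. For `E = ℝ` and
`y = h x` this is the condition on a scalar nonlinearity `h`; for `E` a space of signals it is a
condition on an input-output pair. -/
def InSector (a b : ℝ) (x y : E) : Prop :=
  inner ℝ (y - a • x) (y - b • x) ≤ 0

theorem inSector_real_iff {x y : ℝ} : InSector a b x y ↔ (y - a * x) * (y - b * x) ≤ 0 := by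
  simp only [InSector, smul_eq_mul, Real.inner_apply]

theorem inSector_iff_norm_sq_add_le :
    InSector a b x y ↔ ‖y‖ ^ 2 + a * b * ‖x‖ ^ 2 ≤ (a + b) * inner ℝ x y := by
  have expansion : inner ℝ (y - a • x) (y - b • x) =
      ‖y‖ ^ 2 + a * b * ‖x‖ ^ 2 - (a + b) * inner ℝ x y := by
    simp only [inner_sub_left, inner_sub_right, real_inner_smul_left, real_inner_smul_right,
      real_inner_self_eq_norm_sq, real_inner_comm x y]
    ring
  rw [InSector, expansion, sub_nonpos]

namespace InSector

theorem norm (hab : 0 ≤ a + b) (hxy : InSector a b x y) : InSector a b ‖x‖ ‖y‖ := by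
  rw [inSector_iff_norm_sq_add_le] at hxy
  rw [inSector_real_iff]
  linarith [mul_le_mul_of_nonneg_left (real_inner_le_norm x y) hab]

theorem norm_le_mul_norm (hab : 0 ≤ a + b) (hle : a ≤ b) (hxy : InSector a b x y) :
    ‖y‖ ≤ b * ‖x‖ := by
  have hnorm : (‖y‖ - a * ‖x‖) * (‖y‖ - b * ‖x‖) ≤ 0 := inSector_real_iff.1 (hxy.norm hab)
  by_contra! hlt
  have : a * ‖x‖ ≤ b * ‖x‖ := mul_le_mul_of_nonneg_right hle (norm_nonneg x)
  exact hnorm.not_gt (mul_pos (by linarith) (by linarith))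

theorem two_mul_sqrt_mul_norm_mul_norm_le (hab : 0 ≤ a * b) (hxy : InSector a b x y) :
    2 * √(a * b) * ‖x‖ * ‖y‖ ≤ (a + b) * inner ℝ x y :=
  calc 2 * √(a * b) * ‖x‖ * ‖y‖ = 2 * ‖y‖ * (√(a * b) * ‖x‖) := by ring
    _ ≤ ‖y‖ ^ 2 + (√(a * b) * ‖x‖) ^ 2 := two_mul_le_add_sq _ _
    _ = ‖y‖ ^ 2 + a * b * ‖x‖ ^ 2 := by rw [mul_pow, sq_sqrt hab]
    _ ≤ (a + b) * inner ℝ x y := inSector_iff_norm_sq_add_le.1 hxy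

end InSector

end InnerProduct

section Lebesgue

variable {α E : Type*} [MeasurableSpace α] {μ : Measure α}
  [NormedAddCommGroup E] [InnerProductSpace ℝ E] {a b : ℝ} {u v : α → E}

theorem inner_toLp_toLp_eq_integral (hu : MemLp u 2 μ) (hv : MemLp v 2 μ) :
    inner ℝ (hu.toLp u) (hv.toLp v) = ∫ t, inner ℝ (u t) (v t) ∂μ := by
  rw [L2.inner_def]
  refine integral_congr_ae ?_
  filter_upwards [hu.coeFn_toLp, hv.coeFn_toLp] with t hut hvt
  rw [hut, hvt]

theorem norm_toLp_eq_sqrt_integral_norm_sq (hu : MemLp u 2 μ) :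
    ‖hu.toLp u‖ = √(∫ t, ‖u t‖ ^ 2 ∂μ) := by
  rw [norm_eq_sqrt_real_inner, inner_toLp_toLp_eq_integral]
  simp only [real_inner_self_eq_norm_sq]

theorem InSector.toLp (hu : MemLp u 2 μ) (hv : MemLp v 2 μ)
    (huv : ∀ᵐ t ∂μ, InSector a b (u t) (v t)) : InSector a b (hu.toLp u) (hv.toLp v) := by
  rw [InSector, ← MemLp.toLp_const_smul, ← MemLp.toLp_const_smul, ← MemLp.toLp_sub,
    ← MemLp.toLp_sub, inner_toLp_toLp_eq_integral]
  exact integral_nonpos_of_ae huv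

theorem sector_nonlinearity_singular_angle_general (ha : 0 ≤ a) (hab : a < b)
    (hu : MemLp u 2 μ) (hv : AEStronglyMeasurable v μ)
    (huv : ∀ᵐ t ∂μ, InSector a b (u t) (v t)) :
    2 * √(a * b) / (a + b) * √(∫ t, ‖u t‖ ^ 2 ∂μ) * √(∫ t, ‖v t‖ ^ 2 ∂μ) ≤
      ∫ t, inner ℝ (u t) (v t) ∂μ := by
  have hb : 0 < b := ha.trans_lt hab
  have hsum : 0 < a + b := add_pos_of_nonneg_of_pos ha hb
  have hv₂ : MemLp v 2 μ :=
    hu.of_le_mul hv (huv.mono fun _ ht => ht.norm_le_mul_norm hsum.le hab.le)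
  rw [← norm_toLp_eq_sqrt_integral_norm_sq hu, ← norm_toLp_eq_sqrt_integral_norm_sq hv₂,
    ← inner_toLp_toLp_eq_integral hu hv₂, div_mul_eq_mul_div, div_mul_eq_mul_div, div_le_iff₀' hsum]
  exact (InSector.toLp hu hv₂ huv).two_mul_sqrt_mul_norm_mul_norm_le (mul_nonneg ha hb.le)

end Lebesgue

/-- **Singular angle of a sector bounded static nonlinearity.**
If `h` is measurable and in the sector `[a,b]` with `0 < a < b`, then for every
square-integrable measurable `u`,
`∫ u·(h∘u) ≥ (2√(ab)/(a+b))·(∫ u²)^{1/2}·(∫ (h∘u)²)^{1/2}`;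
that is, the singular angle of the static nonlinearity `u ↦ h ∘ u` is at most
`arccos(2√(ab)/(a+b)) < π/2`. -/
theorem sector_nonlinearity_singular_angle
    (a b : ℝ) (ha : 0 < a) (hab : a < b) (h : ℝ → ℝ) (hmeas : Measurable h)
    (hsector : ∀ x : ℝ, (h x - a * x) * (h x - b * x) ≤ 0) :
    (∀ u : ℝ → ℝ, Measurable u →
      Integrable (fun t => (u t) ^ 2) (volume : Measure ℝ) →
      (∫ t, u t * h (u t)) ≥
        (2 * Real.sqrt (a * b) / (a + b)) * Real.sqrt (∫ t, (u t) ^ 2) *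
          Real.sqrt (∫ t, (h (u t)) ^ 2)) ∧
    Real.arccos (2 * Real.sqrt (a * b) / (a + b)) < π / 2 := by
  have hb : 0 < b := ha.trans hab
  refine ⟨fun u hu hu₂ => ?_, arccos_lt_pi_div_two.2 (by positivity)⟩
  have hu_memLp : MemLp u 2 := (memLp_two_iff_integrable_sq hu.aestronglyMeasurable).2 hu₂
  have hhu : Measurable fun t => h (u t) := hmeas.comp hu
  simpa only [ge_iff_le, norm_eq_abs, sq_abs, inner_apply] using
    sector_nonlinearity_singular_angle_general ha.le hab hu_memLp hhu.aestronglyMeasurable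
      (.of_forall fun t => inSector_real_iff.2 (hsector (u t)))
end
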